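/- Let n ≥ 2, let c, x ∈ ℝⁿ and r, p > 0 with |c − x| > p + r, set v = (p/(p+r))·c + (r/(p+r))·x (the vertex of the double cone tangent to both balls), and let w ∈ ℝⁿ with |w| = 1. Then the hyperplane H[w; ⟪w,v⟫] through v separates B[c,r] and B[x,p] if and only if there exists some b ∈ ℝ such that H[w;b] separates B[c,r] and B[x,p]; equivalently, H[w; ⟪w,v⟫] separates the two balls if and only if |⟪w, (c − x)/|c − x|⟫| ≥ (p + r)/|c − x|. (Thus the choice of bias b = ⟪w,v⟫ is optimal.) -/

import Mathlib

open MeasureTheory Metric Real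
open scoped RealInnerProductSpace

/-- `H[w;b]` separates `B[c,r]` and `B[x,p]`: the linear functional `u ↦ ⟪w,u⟫ - b`
is positive on one open ball and negative on the other. -/
def Separates {n : ℕ} (w : EuclideanSpace ℝ (Fin n)) (b : ℝ)
    (c : EuclideanSpace ℝ (Fin n)) (r : ℝ)
    (x : EuclideanSpace ℝ (Fin n)) (p : ℝ) : Prop :=
  ((∀ u ∈ ball c r, 0 < ⟪w, u⟫ - b) ∧ (∀ u ∈ ball x p, ⟪w, u⟫ - b < 0)) ∨
  ((∀ u ∈ ball c r, ⟪w, u⟫ - b < 0) ∧ (∀ u ∈ ball x p, 0 < ⟪w, u⟫ - b))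

theorem pos_iff {n : ℕ} (w : EuclideanSpace ℝ (Fin n)) (hw : ‖w‖ = 1) (b : ℝ)
    (c : EuclideanSpace ℝ (Fin n)) (r : ℝ) (hr : 0 < r) :
    (∀ u ∈ ball c r, 0 < ⟪w, u⟫ - b) ↔ r ≤ ⟪w, c⟫ - b := by
  constructor
  · intro h
    by_contra! hlt
    have h0 := h c (mem_ball_self hr)
    have h1 := h (c - (⟪w, c⟫ - b) • w) (by
      rw [mem_ball, dist_eq_norm, sub_sub_cancel_left, norm_neg, norm_smul, hw, mul_one,
        Real.norm_eq_abs, abs_of_pos h0]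
      exact hlt)
    rw [inner_sub_right, inner_smul_right, real_inner_self_eq_norm_sq, hw] at h1
    linarith
  · intro h u hu
    rw [mem_ball, dist_eq_norm] at hu
    have h1 := abs_le.1 (abs_real_inner_le_norm w (u - c))
    rw [hw, one_mul, inner_sub_right] at h1
    linarith [h1.1]

theorem neg_iff {n : ℕ} (w : EuclideanSpace ℝ (Fin n)) (hw : ‖w‖ = 1) (b : ℝ)
    (c : EuclideanSpace ℝ (Fin n)) (r : ℝ) (hr : 0 < r) :
    (∀ u ∈ ball c r, ⟪w, u⟫ - b < 0) ↔ r ≤ b - ⟪w, c⟫ := by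
  have h := pos_iff (-w) (by rwa [norm_neg]) (-b) c r hr
  simp only [inner_neg_left] at h
  rw [show b - ⟪w, c⟫ = -⟪w, c⟫ - -b by ring, ← h]
  refine forall₂_congr fun u _ => ?_
  constructor <;> intro h <;> linarith

theorem stmt6 (n : ℕ) (hn : 2 ≤ n) (c x : EuclideanSpace ℝ (Fin n)) (r p : ℝ)
    (hr : 0 < r) (hp : 0 < p) (hdist : p + r < ‖c - x‖)
    (v : EuclideanSpace ℝ (Fin n))
    (hv : v = (p / (p + r)) • c + (r / (p + r)) • x)
    (w : EuclideanSpace ℝ (Fin n)) (hw : ‖w‖ = 1) :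
    (Separates w ⟪w, v⟫ c r x p ↔ ∃ b : ℝ, Separates w b c r x p) ∧
    (Separates w ⟪w, v⟫ c r x p ↔
      (p + r) / ‖c - x‖ ≤ |⟪w, ‖c - x‖⁻¹ • (c - x)⟫|) := by
  have hs : 0 < p + r := by linarith
  have hd : 0 < ‖c - x‖ := by linarith
  have e1 : ⟪w, c⟫ - ⟪w, v⟫ = r * ((⟪w, c⟫ - ⟪w, x⟫) / (p + r)) := by
    rw [hv, inner_add_right, inner_smul_right, inner_smul_right]
    field_simp
    ring
  have e2 : ⟪w, v⟫ - ⟪w, x⟫ = p * ((⟪w, c⟫ - ⟪w, x⟫) / (p + r)) := by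
    rw [hv, inner_add_right, inner_smul_right, inner_smul_right]
    field_simp
    ring
  have key : ∀ b, Separates w b c r x p → p + r ≤ |⟪w, c⟫ - ⟪w, x⟫| := by
    intro b h
    unfold Separates at h
    rw [pos_iff w hw b c r hr, neg_iff w hw b x p hp, neg_iff w hw b c r hr,
      pos_iff w hw b x p hp] at h
    rw [le_abs]
    rcases h with ⟨h1, h2⟩ | ⟨h1, h2⟩
    · left; linarith
    · right; linarith
  have key2 : p + r ≤ |⟪w, c⟫ - ⟪w, x⟫| → Separates w ⟪w, v⟫ c r x p := by
    intro h
    unfold Separates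
    rw [pos_iff w hw _ c r hr, neg_iff w hw _ x p hp, neg_iff w hw _ c r hr,
      pos_iff w hw _ x p hp]
    rcases le_abs.1 h with h | h
    · left
      have := (one_le_div hs).2 h
      constructor <;> nlinarith
    · right
      have := (one_le_div hs).2 h
      rw [neg_div] at this
      constructor <;> nlinarith
  have e3 : (p + r) / ‖c - x‖ ≤ |⟪w, ‖c - x‖⁻¹ • (c - x)⟫| ↔
      p + r ≤ |⟪w, c⟫ - ⟪w, x⟫| := by
    rw [inner_smul_right, abs_mul, abs_of_pos (inv_pos.2 hd), inner_sub_right, inv_mul_eq_div,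
      div_le_div_iff_of_pos_right hd]
  rw [e3]
  exact ⟨⟨fun h => ⟨_, h⟩, fun ⟨b, h⟩ => key2 (key b h)⟩, key _, key2⟩
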